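/- Let σ : ℝ → ℝ be correlating, meaning that for every fixed k the sequence n ↦ INAL(M_k, σ) is noticeable (i.e., Ω(n^{-c}) for some c). If (f_n) is a sequence of Boolean functions f_n : {±1}^n → {±1} such that INAL(f_n, σ) is negligible, then (f_n) is high-degree, i.e., for every fixed k the sequence n ↦ W^{≤k}(f_n) is negligible. -/

import Mathlib

open MeasureTheory ProbabilityTheory Filter Finset Asymptotics
open scoped NNReal ENNReal

noncomputable section

/-- The ±1 value encoded by a Boolean bit. -/
def bsign (b : Bool) : ℝ := if b then 1 else -1

/-- Expectation over a uniformly random point of the Boolean cube `{±1}^n`. -/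
def bExp (n : ℕ) (g : (Fin n → Bool) → ℝ) : ℝ :=
  (∑ x : Fin n → Bool, g x) / 2 ^ n

/-- A function on the Boolean cube is Boolean(-valued) if it takes values in `{±1}`. -/
def IsBooleanFn {n : ℕ} (f : (Fin n → Bool) → ℝ) : Prop := ∀ x, f x = 1 ∨ f x = -1

/-- Initialization distribution: the weights `w : ℝⁿ` and the bias `b` are
iid `N(0, 1/n)` Gaussians. -/
def initMeasure (n : ℕ) : Measure ((Fin n → ℝ) × ℝ) :=
  (Measure.pi fun _ : Fin n => gaussianReal 0 (n : ℝ≥0)⁻¹).prod (gaussianReal 0 (n : ℝ≥0)⁻¹)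

/-- Initial alignment `INAL(f, σ) = E_{w,b} [ (E_x [f(x) σ(wᵀx + b)])² ]`. -/
def INAL (n : ℕ) (f : (Fin n → Bool) → ℝ) (σ : ℝ → ℝ) : ℝ :=
  ∫ θ : (Fin n → ℝ) × ℝ,
    (bExp n fun x => f x * σ (∑ i, θ.1 i * bsign (x i) + θ.2)) ^ 2 ∂ initMeasure n

/-- The `v`-Gaussian smoothing `Σ_v(t) = E_{Y ∼ N(0,v)} [σ(Y + t)]`. -/
def gsmooth (σ : ℝ → ℝ) (v : ℝ) (t : ℝ) : ℝ :=
  ∫ y, σ (y + t) ∂ gaussianReal 0 v.toNNReal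

/-- `σ` is polynomially bounded: `|σ(x)| ≤ C |x|^c + C` for some `C, c > 0`. -/
def PolyBounded (σ : ℝ → ℝ) : Prop :=
  ∃ C : ℝ, 0 < C ∧ ∃ c : ℕ, 0 < c ∧ ∀ x : ℝ, |σ x| ≤ C * |x| ^ c + C

/-- `σ` is expressive: measurable, polynomially bounded, and its Gaussian smoothing has no
two consecutive vanishing derivatives at `0`. -/
def Expressive (σ : ℝ → ℝ) : Prop :=
  Measurable σ ∧ PolyBounded σ ∧
    ∀ m : ℕ, iteratedDeriv m (gsmooth σ 1) 0 ≠ 0 ∨ iteratedDeriv (m + 1) (gsmooth σ 1) 0 ≠ 0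

/-- A nonnegative sequence is negligible if it decays faster than any inverse polynomial. -/
def Negligible (g : ℕ → ℝ) : Prop :=
  ∀ c : ℕ, Tendsto (fun n : ℕ => (n : ℝ) ^ c * g n) atTop (nhds 0)

/-- Fourier character `M_S(x) = ∏_{i ∈ S} x_i`. -/
def chi {n : ℕ} (S : Finset (Fin n)) (x : Fin n → Bool) : ℝ := ∏ i ∈ S, bsign (x i)

/-- Fourier coefficient `f̂(S) = E_x [f(x) M_S(x)]`. -/
def fourierCoef (n : ℕ) (f : (Fin n → Bool) → ℝ) (S : Finset (Fin n)) : ℝ :=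
  bExp n fun x => f x * chi S x

/-- Fourier weight up to degree `k`: `W^{≤k}(f)`. -/
def weightLE (n k : ℕ) (f : (Fin n → Bool) → ℝ) : ℝ :=
  ∑ S ∈ Finset.univ.filter (fun S : Finset (Fin n) => S.card ≤ k), fourierCoef n f S ^ 2

/-- Fourier weight strictly below degree `k`: `W^{<k}(f)`. -/
def weightLT (n k : ℕ) (f : (Fin n → Bool) → ℝ) : ℝ :=
  ∑ S ∈ Finset.univ.filter (fun S : Finset (Fin n) => S.card < k), fourierCoef n f S ^ 2

/-- The monomial `M_k(x) = ∏_{i=1}^k x_i`, viewed as a function on `{±1}^n`. -/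
def monomial (n k : ℕ) : (Fin n → Bool) → ℝ :=
  fun x => ∏ i ∈ Finset.univ.filter (fun i : Fin n => (i : ℕ) < k), bsign (x i)

/-- The `N`-extension of `f : {±1}^n → ℝ` (for `n ≤ N`): ignore the last `N - n` coordinates. -/
def extendFn (n N : ℕ) (f : (Fin n → Bool) → ℝ) : (Fin N → Bool) → ℝ :=
  fun x => f fun i => if h : (i : ℕ) < N then x ⟨i, h⟩ else false

/-- Cross-predictability of (the uniform distribution on) the orbit of `f` under coordinate
permutations, with uniform inputs: `CP(orb(f), U^N)`. -/
def orbitCP (N : ℕ) (f : (Fin N → Bool) → ℝ) : ℝ :=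
  (∑ π : Equiv.Perm (Fin N), ∑ π' : Equiv.Perm (Fin N),
      (bExp N fun x => f (fun i => x (π i)) * f (fun i => x (π' i))) ^ 2) /
    (Fintype.card (Equiv.Perm (Fin N))) ^ 2

/-- `N = n^{1+ε}` (rounded up). -/
def Ndim (ε : ℝ) (n : ℕ) : ℕ := ⌈(n : ℝ) ^ (1 + ε)⌉₊


theorem aux_pdf_dom (c : ℝ) {s s' : ℝ≥0} (hs' : s' ≠ 0) (hss : s' < s) :
    ∃ K : ℝ, 0 ≤ K ∧ ∀ x, gaussianPDFReal c s' x ≤ K * gaussianPDFReal 0 s x := by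
  have h1 : (0:ℝ) < s' := by positivity
  have h2 : (s':ℝ) < s := by exact_mod_cast hss
  have h3 : (0:ℝ) < s := h1.trans h2
  have h4 : (0:ℝ) < s - s' := sub_pos.2 h2
  refine ⟨(√(2 * Real.pi * s'))⁻¹ * √(2 * Real.pi * s) * Real.exp (c ^ 2 / (2 * (s - s'))),
    by positivity, fun x => ?_⟩
  simp only [gaussianPDFReal, sub_zero]
  have hsq : 0 < √(2 * Real.pi * s) := by positivity
  have : Real.exp (-(x - c) ^ 2 / (2 * s')) ≤
      Real.exp (c ^ 2 / (2 * (s - s'))) * Real.exp (-x ^ 2 / (2 * s)) := by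
    rw [← Real.exp_add, Real.exp_le_exp]
    have key : c ^ 2 / (2 * ((s:ℝ) - s')) + -x ^ 2 / (2 * s) - (-(x - c) ^ 2 / (2 * s'))
        = ((s - s') * x - s * c) ^ 2 / (2 * s * s' * (s - s')) := by
      field_simp
      ring
    have : 0 ≤ ((s - s') * x - s * c) ^ 2 / (2 * s * s' * ((s:ℝ) - s')) := by positivity
    linarith
  calc _ ≤ (√(2 * Real.pi * s'))⁻¹ * (Real.exp (c ^ 2 / (2 * (s - s'))) * Real.exp (-x ^ 2 / (2 * s))) := by
        gcongr
    _ = _ := by field_simp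

theorem aux_memLp_dom {h : ℝ → ℝ} (c : ℝ) {s s' : ℝ≥0} (hs' : s' ≠ 0) (hss : s' < s)
    (hh : MemLp h 2 (gaussianReal 0 s)) : MemLp h 2 (gaussianReal c s') := by
  obtain ⟨K, hK, hd⟩ := aux_pdf_dom c hs' hss
  have hs : s ≠ 0 := (pos_of_gt hss).ne'
  refine hh.of_measure_le_smul (c := ENNReal.ofReal K) ENNReal.ofReal_ne_top ?_
  rw [gaussianReal_of_var_ne_zero _ hs', gaussianReal_of_var_ne_zero _ hs,
    ← withDensity_smul _ (measurable_gaussianPDF 0 s)]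
  refine withDensity_mono (ae_of_all _ fun x => ?_)
  simp only [gaussianPDF, Pi.smul_apply, smul_eq_mul]
  rw [← ENNReal.ofReal_mul hK]
  exact ENNReal.ofReal_le_ofReal (hd x)

theorem aux_memLp_affine {h : ℝ → ℝ} (c ρ : ℝ) (hρ : ρ ≠ 0) (s : ℝ≥0) :
    MemLp (fun t => h (ρ * t + c)) 2 (gaussianReal 0 s) ↔
      MemLp h 2 (gaussianReal c (NNReal.mk (ρ ^ 2) (sq_nonneg _) * s)) := by
  let e : ℝ ≃ᵐ ℝ := (Homeomorph.mulLeft₀ ρ hρ).toMeasurableEquiv.trans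
    (Homeomorph.addRight c).toMeasurableEquiv
  have he : (e : ℝ → ℝ) = fun t => ρ * t + c := by ext t; simp [e]
  have hmap : (gaussianReal 0 s).map e = gaussianReal c (NNReal.mk (ρ ^ 2) (sq_nonneg _) * s) := by
    rw [he]
    have : (fun t : ℝ => ρ * t + c) = (fun t => t + c) ∘ (fun t => ρ * t) := rfl
    rw [this, ← Measure.map_map (by fun_prop) (by fun_prop), gaussianReal_map_const_mul,
      gaussianReal_map_add_const]
    simp
  rw [← hmap, e.measurableEmbedding.memLp_map_measure_iff, he]
  rfl

theorem aux_slice {q D : ℝ → ℝ} (hq : AEStronglyMeasurable q volume)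
    (hI : Integrable (fun t => q t ^ 2 * D t)) {k κ : ℝ} (hk : 0 < k)
    (hD : ∀ t, k * Real.exp (-κ * t ^ 2) ≤ D t) {s : ℝ≥0} (hs : s ≠ 0)
    (hsκ : κ ≤ 1 / (2 * s)) : MemLp q 2 (gaussianReal 0 s) := by
  have hac := gaussianReal_absolutelyContinuous (0:ℝ) hs
  rw [memLp_two_iff_integrable_sq (hq.mono_ac hac), gaussianReal_of_var_ne_zero _ hs,
    integrable_withDensity_iff_integrable_smul' (measurable_gaussianPDF _ _)
      (ae_of_all _ fun x => gaussianPDF_lt_top)]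
  have hs0 : (0:ℝ) < s := by positivity
  refine Integrable.mono (hI.const_mul ((√(2 * Real.pi * s))⁻¹ * k⁻¹)) ?_ (ae_of_all _ fun t => ?_)
  · exact ((measurable_gaussianPDF _ _).ennreal_toReal.aestronglyMeasurable).smul (hq.pow 2)
  · have hD0 : 0 ≤ D t := le_trans (by positivity) (hD t)
    rw [toReal_gaussianPDF, smul_eq_mul, Real.norm_of_nonneg
      (mul_nonneg (gaussianPDFReal_nonneg _ _ _) (sq_nonneg _)),
      Real.norm_of_nonneg (by positivity)]
    simp only [gaussianPDFReal, sub_zero]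
    have : Real.exp (-t ^ 2 / (2 * s)) ≤ k⁻¹ * D t := by
      rw [inv_mul_eq_div, le_div_iff₀ hk, mul_comm]
      refine le_trans ?_ (hD t)
      gcongr
      have : κ * t ^ 2 ≤ 1 / (2 * s) * t ^ 2 := by gcongr
      calc -t ^ 2 / (2 * (s:ℝ)) = - (1 / (2 * s) * t ^ 2) := by ring
        _ ≤ _ := by linarith
    calc _ ≤ (√(2 * Real.pi * s))⁻¹ * (k⁻¹ * D t) * q t ^ 2 := by gcongr
      _ = _ := by ring

theorem aux_pi_density (n : ℕ) {v : ℝ≥0} (hv : v ≠ 0) :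
    (Measure.pi fun _ : Fin n => gaussianReal 0 v) =
      (volume : Measure (Fin n → ℝ)).withDensity
        (fun w => ENNReal.ofReal (∏ i, gaussianPDFReal 0 v (w i))) := by
  symm
  refine (Measure.pi_eq fun s hs => ?_).symm
  rw [withDensity_apply _ (MeasurableSet.univ_pi hs), volume_pi, Measure.restrict_pi_pi,
    ← ofReal_integral_eq_lintegral_ofReal, integral_fintype_prod_eq_prod,
    ENNReal.ofReal_prod_of_nonneg]
  · exact Finset.prod_congr rfl fun i _ => (gaussianReal_apply_eq_integral 0 hv _).symm
  · exact fun i _ => integral_nonneg fun x => gaussianPDFReal_nonneg _ _ _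
  · exact Integrable.fintype_prod fun i => (integrable_gaussianPDFReal 0 v).restrict
  · exact ae_of_all _ fun w => Finset.prod_nonneg fun i _ => gaussianPDFReal_nonneg _ _ _

theorem aux_init_integrable {n : ℕ} (hn : n ≠ 0) {F : (Fin n → ℝ) × ℝ → ℝ}
    (hF : Integrable F (initMeasure n)) :
    Integrable (fun θ : (Fin n → ℝ) × ℝ =>
      F θ * Real.exp (-(n / 2) * (∑ i, θ.1 i ^ 2 + θ.2 ^ 2))) := by
  have hv : ((n : ℝ≥0)⁻¹) ≠ 0 := by positivity
  have hn0 : (n : ℝ) ≠ 0 := by positivity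
  unfold initMeasure at hF
  rw [aux_pi_density n hv, gaussianReal_of_var_ne_zero _ hv, prod_withDensity (by
      have := measurable_gaussianPDFReal 0 ((n : ℝ≥0)⁻¹)
      fun_prop) (measurable_gaussianPDF _ _),
    integrable_withDensity_iff_integrable_smul' (by
      have := measurable_gaussianPDFReal 0 ((n : ℝ≥0)⁻¹)
      have := measurable_gaussianPDF 0 ((n : ℝ≥0)⁻¹)
      fun_prop)
      (ae_of_all _ fun x => ENNReal.mul_lt_top ENNReal.ofReal_lt_top gaussianPDF_lt_top)] at hF
  have h2 := hF.const_mul (((√(2 * Real.pi * (n:ℝ)⁻¹))⁻¹ ^ (n + 1))⁻¹)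
  refine h2.congr (ae_of_all _ fun θ => ?_)
  have hpos : 0 < √(2 * Real.pi * (n:ℝ)⁻¹) := by positivity
  simp only [ENNReal.toReal_mul, toReal_gaussianPDF, smul_eq_mul]
  rw [ENNReal.toReal_ofReal (Finset.prod_nonneg fun i _ => gaussianPDFReal_nonneg _ _ _)]
  simp only [gaussianPDFReal, sub_zero, Finset.prod_mul_distrib, Finset.prod_const,
    Finset.card_univ, Fintype.card_fin, ← Real.exp_sum, NNReal.coe_inv, NNReal.coe_natCast]
  have e1 : Real.exp (-(n / 2) * (∑ i, θ.1 i ^ 2 + θ.2 ^ 2)) =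
      Real.exp (∑ i, -θ.1 i ^ 2 / (2 * (n:ℝ)⁻¹)) * Real.exp (-θ.2 ^ 2 / (2 * (n:ℝ)⁻¹)) := by
    rw [← Real.exp_add, ← Finset.sum_div, Finset.sum_neg_distrib]
    congr 1
    field_simp
    ring
  rw [e1, pow_succ]
  field_simp

theorem aux_haar_pull {E F : Type*} [NormedAddCommGroup E] [NormedSpace ℝ E]
    [FiniteDimensional ℝ E] [MeasurableSpace E] [BorelSpace E]
    [NormedAddCommGroup F] [NormedSpace ℝ F] [FiniteDimensional ℝ F]
    [MeasurableSpace F] [BorelSpace F] (μ : Measure E) [μ.IsAddHaarMeasure]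
    (ν : Measure F) [ν.IsAddHaarMeasure] (e : E ≃ₗ[ℝ] F) {f : F → ℝ} (hf : Integrable f ν) :
    Integrable (fun x => f (e x)) μ := by
  let L := e.toContinuousLinearEquiv
  have h := Measure.isAddLeftInvariant_eq_smul (μ.map L) ν
  have h1 : Integrable f (μ.map L) := by
    rw [h]; exact hf.smul_measure_nnreal
  exact h1.comp_aemeasurable L.continuous.measurable.aemeasurable

theorem aux_sum_law {n : ℕ} (v : ℝ≥0) (s : Finset (Fin n)) :
    (Measure.pi fun _ : Fin n => gaussianReal 0 v).map (fun w => ∑ i ∈ s, w i) =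
      gaussianReal 0 (s.card * v) := by
  classical
  induction s using Finset.induction_on with
  | empty => simp
  | insert a s ha ih =>
    have hind : iIndepFun (fun (i : Fin n) (w : Fin n → ℝ) => w i)
        (Measure.pi fun _ : Fin n => gaussianReal 0 v) :=
      iIndepFun_pi (X := fun _ x => x) fun i => aemeasurable_id
    have h2 := hind.indepFun_finsetSum_of_notMem (fun i => by fun_prop) ha
    have h3 := gaussianReal_add_gaussianReal_of_indepFun
      (P := Measure.pi fun _ : Fin n => gaussianReal 0 v) h2.symm
      (m₁ := 0) (m₂ := 0) (v₁ := v) (v₂ := s.card * v)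
      (measurePreserving_eval (fun _ : Fin n => gaussianReal 0 v) a).map_eq
      (by rw [← ih]; congr 1; ext w; simp)
    rw [Finset.card_insert_of_notMem ha]
    convert h3 using 2
    · ext w; simp [Finset.sum_insert ha]
    · simp
    · push_cast; ring

def flipMap {n : ℕ} (z : Fin n → Bool) (θ : (Fin n → ℝ) × ℝ) : (Fin n → ℝ) × ℝ :=
  (fun i => bsign (z i) * θ.1 i, θ.2)

theorem aux_flip {n : ℕ} (z : Fin n → Bool) :
    MeasurePreserving (flipMap z) (initMeasure n) (initMeasure n) := by
  unfold initMeasure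
  refine MeasurePreserving.prod (f := fun (w : Fin n → ℝ) i => bsign (z i) * w i) (g := id) ?_ (MeasurePreserving.id _)
  refine measurePreserving_pi (f := fun i t => bsign (z i) * t) _ _ fun i => ⟨by fun_prop, ?_⟩
  rw [gaussianReal_map_const_mul]
  congr 1
  · simp
  · ext; cases z i <;> simp [bsign]

theorem aux_perm {n : ℕ} (π : Equiv.Perm (Fin n)) :
    MeasurePreserving (fun θ : (Fin n → ℝ) × ℝ => ((fun i => θ.1 (π i)), θ.2))
      (initMeasure n) (initMeasure n) := by
  unfold initMeasure
  refine MeasurePreserving.prod (f := fun (w : Fin n → ℝ) i => w (π i)) (g := id) ?_ (MeasurePreserving.id _)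
  have := measurePreserving_piCongrLeft (fun _ : Fin n => gaussianReal 0 (n:ℝ≥0)⁻¹) π.symm
  convert this using 1
  ext w i
  simp [MeasurableEquiv.coe_piCongrLeft, Equiv.piCongrLeft_apply]

theorem aux_lin_law {n : ℕ} (hn : n ≠ 0) (x : Fin n → Bool) :
    MeasurePreserving (fun θ : (Fin n → ℝ) × ℝ => ∑ i, θ.1 i * bsign (x i) + θ.2)
      (initMeasure n) (gaussianReal 0 (1 + (n:ℝ≥0)⁻¹)) := by
  have h1 : MeasurePreserving (fun θ : (Fin n → ℝ) × ℝ => ∑ i, θ.1 i + θ.2)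
      (initMeasure n) (gaussianReal 0 (1 + (n:ℝ≥0)⁻¹)) := by
    refine ⟨by fun_prop, ?_⟩
    have e1 : (fun θ : (Fin n → ℝ) × ℝ => ∑ i, θ.1 i + θ.2) =
      (fun p : ℝ × ℝ => p.1 + p.2) ∘ (Prod.map (fun w : Fin n → ℝ => ∑ i, w i) id) := rfl
    rw [e1, ← Measure.map_map (by fun_prop) (by fun_prop), initMeasure,
      ← Measure.map_prod_map _ _ (by fun_prop) (by fun_prop), aux_sum_law, Measure.map_id]
    have := gaussianReal_conv_gaussianReal (m₁ := 0) (m₂ := 0)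
      (v₁ := (Finset.univ : Finset (Fin n)).card * (n:ℝ≥0)⁻¹) (v₂ := (n:ℝ≥0)⁻¹)
    rw [Measure.conv] at this
    rw [this]
    simp [hn]
  convert h1.comp (aux_flip x) using 1
  ext θ
  simp [flipMap, mul_comm]

theorem aux_1d {g : ℝ → ℝ} {K a : ℝ} (hK : 0 < K)
    (hP : Integrable (fun p : ℝ × ℝ => g p.1 * g p.2 * (K * Real.exp (-a * (p.1 ^ 2 + p.2 ^ 2)))))
    (hQ : Integrable (fun p : ℝ × ℝ =>
      (g p.1 ^ 2 + g p.2 ^ 2) * (K * Real.exp (-a * (p.1 ^ 2 + p.2 ^ 2)))))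
    {s : ℝ≥0} (hs : s ≠ 0) (has : a ≤ 1 / (2 * s)) : MemLp g 2 (gaussianReal 0 s) := by
  have hP' := hP.prod_right_ae
  have hQ' := hQ.prod_right_ae
  have hg : AEStronglyMeasurable g volume := by
    by_cases hex : ∃ u, g u ≠ 0 ∧ Integrable (fun v => g u * g v *
        (K * Real.exp (-a * (u ^ 2 + v ^ 2))))
    · obtain ⟨u, hu, hI⟩ := hex
      have hm : AEStronglyMeasurable (fun v => (g u * (K * Real.exp (-a * (u ^ 2 + v ^ 2))))⁻¹)
          volume := by
        apply Measurable.aestronglyMeasurable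
        fun_prop
      refine (hI.aestronglyMeasurable.mul hm).congr (ae_of_all _ fun v => ?_)
      have := Real.exp_pos (-a * (u ^ 2 + v ^ 2))
      simp only [Pi.mul_apply]
      field_simp
    · push Not at hex
      have : g =ᵐ[volume] fun _ => 0 := by
        filter_upwards [hP'] with u hu
        by_contra h
        exact hex u h hu
      exact aestronglyMeasurable_const.congr this.symm
  obtain ⟨u, hu⟩ := hQ'.exists
  refine aux_slice hg (D := fun v => K * Real.exp (-a * (u ^ 2 + v ^ 2)))
    (k := K * Real.exp (-a * u ^ 2)) (κ := a) ?_ (by positivity) ?_ hs has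
  · refine Integrable.mono hu ?_ (ae_of_all _ fun v => ?_)
    · exact (hg.pow 2).mul (Measurable.aestronglyMeasurable (by fun_prop))
    · rw [Real.norm_of_nonneg (by positivity), Real.norm_of_nonneg (by positivity)]
      gcongr
      nlinarith [sq_nonneg (g u)]
  · intro t
    rw [mul_assoc, ← Real.exp_add]
    apply le_of_eq
    ring_nf

def cubeSum (σ : ℝ → ℝ) (m : ℕ) (w : Fin m → ℝ) (u : ℝ) : ℝ :=
  ∑ x : Fin m → Bool, σ (∑ i, w i * bsign (x i) + u)

def cubeSumOne (σ : ℝ → ℝ) (m : ℕ) (w : Fin (m + 1) → ℝ) (u : ℝ) : ℝ :=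
  ∑ x : Fin (m + 1) → Bool, bsign (x 0) * σ (∑ i, w i * bsign (x i) + u)

theorem cubeSum_cons (σ : ℝ → ℝ) (m : ℕ) (a : ℝ) (w : Fin m → ℝ) (u : ℝ) :
    cubeSum σ (m + 1) (Fin.cons a w) u = cubeSum σ m w (u + a) + cubeSum σ m w (u - a) := by
  unfold cubeSum
  rw [← (Fin.consEquiv (fun _ => Bool)).sum_comp, Fintype.sum_prod_type, Fintype.sum_bool]
  simp only [Fin.consEquiv, Equiv.coe_fn_mk, Fin.sum_univ_succ, Fin.cons_zero, Fin.cons_succ, bsign]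
  congr 1 <;> refine Finset.sum_congr rfl fun x _ => ?_ <;> congr 1 <;> simp <;> ring

theorem cubeSumOne_cons (σ : ℝ → ℝ) (m : ℕ) (a : ℝ) (w : Fin m → ℝ) (u : ℝ) :
    cubeSumOne σ m (Fin.cons a w) u = cubeSum σ m w (u + a) - cubeSum σ m w (u - a) := by
  unfold cubeSum cubeSumOne
  rw [← (Fin.consEquiv (fun _ => Bool)).sum_comp, Fintype.sum_prod_type, Fintype.sum_bool,
    sub_eq_add_neg, ← Finset.sum_neg_distrib]
  simp only [Fin.consEquiv, Equiv.coe_fn_mk, Fin.sum_univ_succ, Fin.cons_zero, Fin.cons_succ, bsign]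
  congr 1 <;> refine Finset.sum_congr rfl fun x _ => ?_
  · simp; congr 1; ring
  · simp; congr 1; ring

def consLin (m : ℕ) : ((Fin m → ℝ) × (ℝ × ℝ)) ≃ₗ[ℝ] ((Fin (m + 1) → ℝ) × ℝ) where
  toFun p := (Fin.cons ((p.2.1 - p.2.2) / 2) p.1, (p.2.1 + p.2.2) / 2)
  invFun q := (Fin.tail q.1, (q.2 + q.1 0, q.2 - q.1 0))
  map_add' p q := by
    ext i
    · refine Fin.cases ?_ (fun j => ?_) i <;> simp
      ring
    · simp; ring
  map_smul' c p := by
    ext i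
    · refine Fin.cases ?_ (fun j => ?_) i <;> simp
      ring
    · simp; ring
  left_inv p := by
    ext i <;> simp <;> ring
  right_inv q := by
    ext i
    · refine Fin.cases ?_ (fun j => ?_) i <;> simp [Fin.tail]
    · simp

theorem aux_stepA {σ : ℝ → ℝ} {m : ℕ}
    (h0 : Integrable (fun θ => cubeSum σ (m + 1) θ.1 θ.2 ^ 2) (initMeasure (m + 1)))
    (h1 : Integrable (fun θ => cubeSumOne σ m θ.1 θ.2 ^ 2) (initMeasure (m + 1))) :
    ∃ s : ℝ≥0, s ≠ 0 ∧ ∀ᵐ ω : Fin m → ℝ, MemLp (cubeSum σ m ω) 2 (gaussianReal 0 s) := by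
  have j1 : (volume : Measure (ℝ × ℝ)).IsAddHaarMeasure :=
    Measure.prod.instIsAddHaarMeasure volume volume
  have j2 : (volume : Measure ((Fin m → ℝ) × (ℝ × ℝ))).IsAddHaarMeasure :=
    Measure.prod.instIsAddHaarMeasure volume volume
  have j3 : (volume : Measure ((Fin (m + 1) → ℝ) × ℝ)).IsAddHaarMeasure :=
    Measure.prod.instIsAddHaarMeasure volume volume
  have i0 := aux_haar_pull (volume : Measure ((Fin m → ℝ) × (ℝ × ℝ))) volume (consLin m)
    (aux_init_integrable (Nat.succ_ne_zero m) h0)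
  have i1 := aux_haar_pull (volume : Measure ((Fin m → ℝ) × (ℝ × ℝ))) volume (consLin m)
    (aux_init_integrable (Nat.succ_ne_zero m) h1)
  have hden : ∀ p : (Fin m → ℝ) × (ℝ × ℝ),
      Real.exp (-((m + 1 : ℕ) / 2) * (∑ i, (consLin m p).1 i ^ 2 + (consLin m p).2 ^ 2)) =
      Real.exp (-((m + 1 : ℝ) / 2) * ∑ i, p.1 i ^ 2) *
        Real.exp (-((m + 1 : ℝ) / 4) * (p.2.1 ^ 2 + p.2.2 ^ 2)) := by
    intro p
    rw [← Real.exp_add]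
    congr 1
    simp only [consLin, LinearEquiv.coe_mk, LinearMap.coe_mk, AddHom.coe_mk, Fin.sum_univ_succ,
      Fin.cons_zero, Fin.cons_succ]
    push_cast
    ring
  have e0 : ∀ p, cubeSum σ (m + 1) (consLin m p).1 (consLin m p).2 =
      cubeSum σ m p.1 p.2.1 + cubeSum σ m p.1 p.2.2 := by
    intro p
    simp only [consLin, LinearEquiv.coe_mk, LinearMap.coe_mk, AddHom.coe_mk, cubeSum_cons]
    congr 2 <;> ring
  have e1 : ∀ p, cubeSumOne σ m (consLin m p).1 (consLin m p).2 =
      cubeSum σ m p.1 p.2.1 - cubeSum σ m p.1 p.2.2 := by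
    intro p
    simp only [consLin, LinearEquiv.coe_mk, LinearMap.coe_mk, AddHom.coe_mk, cubeSumOne_cons]
    congr 2 <;> ring
  simp only [hden, e0, e1] at i0 i1
  have hP := ((i0.sub i1).const_mul (1 / 4)).prod_right_ae
  have hQ := ((i0.add i1).const_mul (1 / 2)).prod_right_ae
  have hs : (2 / (m + 1) : ℝ≥0) ≠ 0 := by positivity
  refine ⟨2 / (m + 1), hs, ?_⟩
  filter_upwards [hP, hQ] with ω hPω hQω
  refine aux_1d (K := Real.exp (-((m + 1 : ℝ) / 2) * ∑ i, ω i ^ 2)) (a := (m + 1 : ℝ) / 4)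
    (by positivity) ?_ ?_ hs ?_
  · refine hPω.congr (ae_of_all _ fun p => ?_)
    simp only [Pi.sub_apply]; ring
  · refine hQω.congr (ae_of_all _ fun p => ?_)
    simp only [Pi.add_apply]; ring
  · apply le_of_eq
    push_cast
    field_simp
    ring

def InV (h : ℝ → ℝ) : Prop := ∃ s : ℝ≥0, s ≠ 0 ∧ MemLp h 2 (gaussianReal 0 s)

theorem InV.lower {h : ℝ → ℝ} {s : ℝ≥0} (hs : s ≠ 0) (hh : MemLp h 2 (gaussianReal 0 s))
    {s' : ℝ≥0} (hs' : s' ≠ 0) (hle : s' ≤ s) : MemLp h 2 (gaussianReal 0 s') := by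
  rcases hle.eq_or_lt with rfl | h
  · exact hh
  · exact aux_memLp_dom 0 hs' h hh

theorem InV.add {g h : ℝ → ℝ} (hg : InV g) (hh : InV h) : InV (fun t => g t + h t) := by
  obtain ⟨s, hs, hg⟩ := hg
  obtain ⟨r, hr, hh⟩ := hh
  have hp : min s r ≠ 0 := (lt_min (pos_iff_ne_zero.2 hs) (pos_iff_ne_zero.2 hr)).ne'
  exact ⟨min s r, hp, (InV.lower hs hg hp (min_le_left _ _)).add
    (InV.lower hr hh hp (min_le_right _ _))⟩

theorem InV.const_mul {g : ℝ → ℝ} (hg : InV g) (c : ℝ) : InV (fun t => c * g t) := by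
  obtain ⟨s, hs, hg⟩ := hg
  exact ⟨s, hs, hg.const_mul c⟩

theorem InV.shift {g : ℝ → ℝ} (hg : InV g) (c : ℝ) : InV (fun t => g (t + c)) := by
  obtain ⟨s, hs, hg⟩ := hg
  have h2 : s / 2 ≠ 0 := by positivity
  refine ⟨s / 2, h2, ?_⟩
  have := (aux_memLp_affine (h := g) c 1 one_ne_zero (s / 2)).2 (by
    have e : NNReal.mk ((1:ℝ) ^ 2) (sq_nonneg _) * (s / 2) = s / 2 := by
      ext; simp
    rw [e]
    exact aux_memLp_dom c h2 (NNReal.half_lt_self hs) hg)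
  simpa using this

theorem aux_double {σ : ℝ → ℝ} : ∀ (m : ℕ) (h : Fin m → ℝ),
    (∀ ε : Fin m → Bool, InV (cubeSum σ m (fun i => (if ε i then 1 else 2) * h i))) → InV σ
  | 0, h, H => by
    have := H (fun _ => true)
    have e : cubeSum σ 0 (fun i => (if true then 1 else 2) * h i) = σ := by
      ext u; simp [cubeSum]
    rwa [e] at this
  | m + 1, h, H => by
    refine aux_double m (Fin.tail h) fun ε => ?_
    set w : Fin m → ℝ := fun i => (if ε i then 1 else 2) * Fin.tail h i with hw
    have e : ∀ b : Bool, (fun i => (if (Fin.cons b ε : Fin (m + 1) → Bool) i then (1:ℝ) else 2) * h i)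
        = Fin.cons ((if b then 1 else 2) * h 0) w := by
      intro b
      ext i
      refine Fin.cases ?_ (fun j => ?_) i <;> simp [hw, Fin.tail]
    have h1 := H (Fin.cons true ε)
    have h2 := H (Fin.cons false ε)
    rw [e] at h1 h2
    have h3 := ((h1.shift (h 0)).add (h1.shift (-h 0))).add (h2.const_mul (-1))
    have h4 := h3.const_mul (1 / 2)
    convert h4 using 1
    ext t
    simp only [cubeSum_cons]
    simp only [if_true, Bool.false_eq_true, if_false, one_mul]
    have a1 : t + h 0 - h 0 = t := by ring
    have a2 : t + -h 0 + h 0 = t := by ring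
    have a3 : t + h 0 + h 0 = t + 2 * h 0 := by ring
    have a4 : t + -h 0 - h 0 = t - 2 * h 0 := by ring
    rw [a1, a2, a3, a4]
    ring

theorem aux_stepB {σ : ℝ → ℝ} {m : ℕ}
    (H : ∀ᵐ ω : Fin m → ℝ, InV (cubeSum σ m ω)) : InV σ := by
  have h1 : ∀ ε : Fin m → Bool, ∀ᵐ ω : Fin m → ℝ,
      InV (cubeSum σ m (fun i => (if ε i then 1 else 2) * ω i)) := by
    intro ε
    let L := Matrix.toLin' (Matrix.diagonal fun i => if ε i then (1:ℝ) else 2)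
    have hL : LinearMap.det L ≠ 0 := by
      simp only [L, LinearMap.det_toLin', Matrix.det_diagonal]
      refine Finset.prod_ne_zero_iff.2 fun i _ => ?_
      split_ifs <;> norm_num
    have hq : Measure.QuasiMeasurePreserving L volume volume := by
      refine ⟨L.continuous_of_finiteDimensional.measurable, ?_⟩
      rw [Measure.map_linearMap_addHaar_eq_smul_addHaar _ hL]
      exact Measure.smul_absolutelyContinuous
    have := hq.ae H
    filter_upwards [this] with ω hω
    convert hω using 2
    ext i
    simp [L, Matrix.mulVec_diagonal]
  obtain ⟨h, hh⟩ := (ae_all_iff.2 h1).exists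
  exact aux_double m h hh

theorem InV.aesm {σ : ℝ → ℝ} (h : InV σ) : AEStronglyMeasurable σ volume := by
  obtain ⟨s, hs, h⟩ := h
  exact h.aestronglyMeasurable.mono_ac (gaussianReal_absolutelyContinuous' 0 hs)

theorem aux_term {σ : ℝ → ℝ} {s s1 : ℝ≥0} (hs : s ≠ 0) (h : MemLp σ 2 (gaussianReal 0 s1))
    (ρ c : ℝ) (hρ : ρ ^ 2 * s < s1) :
    MemLp (fun t => σ (ρ * t + c)) 2 (gaussianReal 0 s) := by
  by_cases h0 : ρ = 0
  · subst h0
    simp only [zero_mul, zero_add]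
    exact memLp_const _
  · rw [aux_memLp_affine c ρ h0 s]
    refine aux_memLp_dom c ?_ ?_ h
    · have : NNReal.mk (ρ ^ 2) (sq_nonneg _) ≠ 0 := by
        intro h; apply h0
        have := congrArg NNReal.toReal h
        simpa using this
      positivity
    · rw [← NNReal.coe_lt_coe]; simpa using hρ

theorem bsign_abs (b : Bool) : |bsign b| ≤ 1 := by cases b <;> simp [bsign]

theorem aux_rho {n : ℕ} (x : Fin n → Bool) (hx : x ≠ fun _ => true) :
    |1 + ∑ i, bsign (x i)| ≤ (n:ℝ) - 1 := by
  obtain ⟨i, hi⟩ : ∃ i, x i = false := by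
    by_contra h
    push Not at h
    exact hx (funext fun i => by simpa using h i)
  rw [← Finset.add_sum_erase _ _ (Finset.mem_univ i), hi]
  have : 1 + (bsign false + ∑ j ∈ Finset.univ.erase i, bsign (x j)) =
      ∑ j ∈ Finset.univ.erase i, bsign (x j) := by simp [bsign]
  rw [this]
  refine (Finset.abs_sum_le_sum_abs _ _).trans ((Finset.sum_le_sum fun j _ => bsign_abs _).trans ?_)
  have : 1 ≤ n := by have := i.2; omega
  simp [Finset.card_erase_of_mem, this]

def bootLin (n : ℕ) : ((Fin n → ℝ) × ℝ) ≃ₗ[ℝ] ((Fin n → ℝ) × ℝ) where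
  toFun p := (fun i => p.1 i + p.2 / (n + 1), p.2 / (n + 1))
  invFun q := (fun i => q.1 i - q.2, (n + 1) * q.2)
  map_add' p q := by
    ext i <;> simp <;> ring
  map_smul' c p := by
    ext i <;> simp <;> ring
  left_inv p := by
    have : (n:ℝ) + 1 ≠ 0 := by positivity
    ext i <;> simp; field_simp
  right_inv q := by
    have : (n:ℝ) + 1 ≠ 0 := by positivity
    ext i <;> simp [this]

theorem aux_boot {σ : ℝ → ℝ} {n : ℕ} (hn : n ≠ 0)
    (h0 : Integrable (fun θ => cubeSum σ n θ.1 θ.2 ^ 2) (initMeasure n))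
    {s s1 s' : ℝ≥0} (hs' : s' ≠ 0) (hs1 : s1 ≠ 0) (h : MemLp σ 2 (gaussianReal 0 s1))
    (hs's : s' < s) (hsk : s < 1 + (n:ℝ≥0)⁻¹) (hss : s ≤ s1 * (1 + (n:ℝ≥0)⁻¹) ^ 2) :
    MemLp σ 2 (gaussianReal 0 s') := by
  have j3 : (volume : Measure ((Fin n → ℝ) × ℝ)).IsAddHaarMeasure :=
    Measure.prod.instIsAddHaarMeasure volume volume
  have hs : s ≠ 0 := (pos_of_gt hs's).ne'
  have hs0 : (0:ℝ) < s := by positivity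
  have hs10 : (0:ℝ) < s1 := by positivity
  have hn0 : (0:ℝ) < n := by positivity
  have i0 := aux_haar_pull (volume : Measure ((Fin n → ℝ) × ℝ)) volume (bootLin n)
    (aux_init_integrable hn h0)
  obtain ⟨z, hz⟩ := i0.prod_right_ae.exists
  let ρ : (Fin n → Bool) → ℝ := fun x => (1 + ∑ i, bsign (x i)) / (n + 1)
  let c : (Fin n → Bool) → ℝ := fun x => ∑ i, z i * bsign (x i)
  let T : ℝ → ℝ := fun t => ∑ x, σ (ρ x * t + c x)
  have hρ1 : ρ (fun _ => true) = 1 := by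
    simp [ρ, bsign]; field_simp; ring
  have hρ : ∀ x, x ≠ (fun _ => true) → ρ x ^ 2 < (n / (n + 1) : ℝ) ^ 2 := by
    intro x hx
    rw [sq_lt_sq, abs_div, abs_div, abs_of_pos hn0]
    have := aux_rho x hx
    gcongr
    linarith
  have hρle : ∀ x, ρ x ^ 2 ≤ 1 := by
    intro x
    by_cases hx : x = fun _ => true
    · rw [hx, hρ1]; norm_num
    · refine (hρ x hx).le.trans ?_
      rw [sq_le_one_iff₀ (by positivity), div_le_one (by positivity)]
      linarith
  have hT : ∀ t, cubeSum σ n (bootLin n (z, t)).1 (bootLin n (z, t)).2 = T t := by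
    intro t
    simp only [cubeSum, T, ρ, c, bootLin, LinearEquiv.coe_mk, LinearMap.coe_mk, AddHom.coe_mk]
    refine Finset.sum_congr rfl fun x _ => ?_
    congr 1
    simp only [add_mul, Finset.sum_add_distrib, ← Finset.mul_sum]
    ring
  have hTm : AEStronglyMeasurable T volume := by
    have h2 : s1 / 2 ≠ 0 := by positivity
    refine InV.aesm ⟨s1 / 2, h2, ?_⟩
    refine memLp_finsetSum _ fun x _ => aux_term h2 h _ _ ?_
    have := hρle x
    push_cast
    nlinarith
  have hk : (s:ℝ) < 1 + (n:ℝ)⁻¹ := by exact_mod_cast hsk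
  have hδ : 0 < 1 / (2 * s) - (n:ℝ) / (2 * (n + 1)) := by
    have : (n:ℝ) / (2 * (n + 1)) = 1 / (2 * (1 + (n:ℝ)⁻¹)) := by field_simp
    rw [this, sub_pos]
    gcongr
  set δ := 1 / (2 * s) - (n:ℝ) / (2 * (n + 1)) with hδd
  set B : ℝ := n * (∑ i, z i) / (n + 1) with hB
  have hTL : MemLp T 2 (gaussianReal 0 s) := by
    simp only [hT] at hz
    refine aux_slice hTm hz (k := Real.exp (-(n / 2) * (∑ i, z i ^ 2) - B ^ 2 / (4 * δ)))
      (κ := 1 / (2 * s)) (by positivity) ?_ hs le_rfl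
    intro t
    rw [← Real.exp_add, Real.exp_le_exp]
    simp only [bootLin, LinearEquiv.coe_mk, LinearMap.coe_mk, AddHom.coe_mk]
    have e1 : ∑ i, (z i + t / (n + 1)) ^ 2 + (t / (n + 1)) ^ 2 =
        ∑ i, z i ^ 2 + 2 * (t / (n + 1)) * (∑ i, z i) + t ^ 2 / (n + 1) := by
      simp only [add_sq, Finset.sum_add_distrib, Finset.sum_const, Finset.card_univ,
        Fintype.card_fin, nsmul_eq_mul, Finset.mul_sum]
      have : ∑ x, 2 * z x * (t / ((n:ℝ) + 1)) = ∑ x, 2 * (t / ((n:ℝ) + 1)) * z x :=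
        Finset.sum_congr rfl fun x _ => by ring
      rw [this]
      field_simp
      ring
    rw [e1]
    have e2 : -((n:ℝ) / 2) * (∑ i, z i ^ 2 + 2 * (t / (n + 1)) * (∑ i, z i) + t ^ 2 / (n + 1)) -
        (-(n / 2) * (∑ i, z i ^ 2) - B ^ 2 / (4 * δ) + -(1 / (2 * s)) * t ^ 2) =
        δ * t ^ 2 - B * t + B ^ 2 / (4 * δ) := by
      rw [hδd, hB]; generalize B ^ 2 / (4 * (1 / (2 * (s:ℝ)) - (n:ℝ) / (2 * (n + 1)))) = Y
      field_simp
      ring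
    have e3 : δ * t ^ 2 - B * t + B ^ 2 / (4 * δ) = (2 * δ * t - B) ^ 2 / (4 * δ) := by
      field_simp
      ring
    have e4 : 0 ≤ (2 * δ * t - B) ^ 2 / (4 * δ) := by positivity
    linarith
  have hrest : MemLp (fun t => ∑ x ∈ Finset.univ.erase (fun _ => true), σ (ρ x * t + c x)) 2
      (gaussianReal 0 s) := by
    refine memLp_finsetSum _ fun x hx => aux_term hs h _ _ ?_
    have h1 := hρ x (Finset.ne_of_mem_erase hx)
    have h2 : (s:ℝ) ≤ s1 * (1 + (n:ℝ)⁻¹) ^ 2 := by exact_mod_cast hss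
    calc ρ x ^ 2 * s < (n / (n + 1) : ℝ) ^ 2 * s := by gcongr
      _ ≤ (n / (n + 1) : ℝ) ^ 2 * (s1 * (1 + (n:ℝ)⁻¹) ^ 2) := by gcongr
      _ = s1 := by field_simp
  have hmain : MemLp (fun t => σ (t + c (fun _ => true))) 2 (gaussianReal 0 s) := by
    refine (hTL.sub hrest).ae_eq (ae_of_all _ fun t => ?_)
    simp only [Pi.sub_apply, T]
    rw [← Finset.add_sum_erase _ _ (Finset.mem_univ (fun _ => true)), hρ1]
    simp
  have := (aux_memLp_affine (h := fun t => σ (t + c (fun _ => true)))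
    (-c (fun _ => true)) 1 one_ne_zero s').2 (by
      have e : NNReal.mk ((1:ℝ) ^ 2) (sq_nonneg _) * s' = s' := by
        ext; simp
      rw [e]
      exact aux_memLp_dom _ hs' hs's hmain)
  simpa using this

theorem aux_iter {σ : ℝ → ℝ} {n : ℕ} (hn : n ≠ 0)
    (h0 : Integrable (fun θ => cubeSum σ n θ.1 θ.2 ^ 2) (initMeasure n))
    (hV : InV σ) {v : ℝ≥0} (hv : v ≠ 0) (hvk : v < 1 + (n:ℝ≥0)⁻¹) :
    MemLp σ 2 (gaussianReal 0 v) := by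
  obtain ⟨s0, hs0, hh⟩ := hV
  set κ : ℝ≥0 := 1 + (n:ℝ≥0)⁻¹ with hκ
  have hκ1 : 1 < κ := by
    rw [hκ]; exact lt_add_of_pos_right _ (by positivity)
  have hκ0 : 0 < κ := one_pos.trans hκ1
  have hpos : ∀ j : ℕ, 0 < min v (s0 * κ ^ j) := fun j => lt_min (by positivity) (by positivity)
  have H : ∀ j : ℕ, MemLp σ 2 (gaussianReal 0 (min v (s0 * κ ^ j))) := by
    intro j
    induction j with
    | zero =>
      exact InV.lower hs0 hh (hpos 0).ne' (by simp)
    | succ j ih =>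
      have hle : min v (s0 * κ ^ (j + 1)) ≤ min v (s0 * κ ^ j) * κ := by
        rw [min_mul_of_nonneg _ _ zero_le]
        refine min_le_min ?_ ?_
        · exact le_mul_of_one_le_right zero_le hκ1.le
        · rw [pow_succ, mul_assoc]
      have hlt : min v (s0 * κ ^ (j + 1)) < min v (s0 * κ ^ j) * κ ^ 2 := by
        refine hle.trans_lt ?_
        have := hpos j
        gcongr
        rw [sq]; exact lt_mul_of_one_lt_right hκ0 hκ1
      obtain ⟨s, ha, hb⟩ := exists_between (lt_min ((min_le_left _ _).trans_lt hvk) hlt)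
      exact aux_boot hn h0 (hpos (j + 1)).ne' (hpos j).ne' ih ha
        (hb.trans_le (min_le_left _ _)) (hb.le.trans (min_le_right _ _))
  obtain ⟨j, hj⟩ := pow_unbounded_of_one_lt (v / s0) hκ1
  have hjj : v ≤ s0 * κ ^ j := by
    rw [div_lt_iff₀ (by positivity)] at hj
    rw [mul_comm]; exact hj.le
  have := H j
  rwa [min_eq_left hjj] at this

theorem bsign_beq (a b : Bool) : bsign (a == b) = bsign a * bsign b := by
  cases a <;> cases b <;> simp [bsign]

theorem bsign_sq (a : Bool) : bsign a * bsign a = 1 := by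
  cases a <;> simp [bsign]

theorem chi_sq {n : ℕ} (S : Finset (Fin n)) (x : Fin n → Bool) : chi S x ^ 2 = 1 := by
  rw [chi, sq, ← Finset.prod_mul_distrib]
  exact Finset.prod_eq_one fun i _ => bsign_sq _

def beqEquiv {n : ℕ} (x : Fin n → Bool) : (Fin n → Bool) ≃ (Fin n → Bool) :=
  Function.Involutive.toPerm (fun z i => z i == x i) (fun z => by
    ext i; cases h : z i <;> cases h' : x i <;> simp [h, h'])

def alignG (n : ℕ) (f : (Fin n → Bool) → ℝ) (σ : ℝ → ℝ) (θ : (Fin n → ℝ) × ℝ) : ℝ :=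
  bExp n fun x => f x * σ (∑ i, θ.1 i * bsign (x i) + θ.2)

theorem aux_flip_sum (n : ℕ) (f : (Fin n → Bool) → ℝ) (σ : ℝ → ℝ) (S : Finset (Fin n))
    (θ : (Fin n → ℝ) × ℝ) :
    ∑ z, chi S z * alignG n f σ (flipMap z θ) =
      2 ^ n * (fourierCoef n f S * alignG n (chi S) σ θ) := by
  have key : ∀ x : Fin n → Bool,
      ∑ z, chi S z * σ (∑ i, bsign (z i) * θ.1 i * bsign (x i) + θ.2) =
      chi S x * ∑ y, chi S y * σ (∑ i, θ.1 i * bsign (y i) + θ.2) := by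
    intro x
    rw [← (beqEquiv x).sum_comp, Finset.mul_sum]
    refine Finset.sum_congr rfl fun y _ => ?_
    have e1 : ∀ i, bsign (beqEquiv x y i) = bsign (y i) * bsign (x i) := fun i => bsign_beq _ _
    have e2 : chi S (beqEquiv x y) = chi S y * chi S x := by
      simp only [chi, e1, Finset.prod_mul_distrib]
    have e3 : ∀ i, bsign (beqEquiv x y i) * θ.1 i * bsign (x i) = θ.1 i * bsign (y i) := by
      intro i
      rw [e1]
      calc _ = θ.1 i * bsign (y i) * (bsign (x i) * bsign (x i)) := by ring
        _ = _ := by rw [bsign_sq, mul_one]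
    simp only [e2, e3]
    ring
  have h2 : (2:ℝ) ^ n ≠ 0 := by positivity
  calc ∑ z, chi S z * alignG n f σ (flipMap z θ)
      = (∑ x, f x * ∑ z, chi S z * σ (∑ i, bsign (z i) * θ.1 i * bsign (x i) + θ.2)) / 2 ^ n := by
        simp only [alignG, bExp, flipMap, Finset.mul_sum, Finset.sum_div, mul_div_assoc']
        rw [Finset.sum_comm]
        refine Finset.sum_congr rfl fun x _ => Finset.sum_congr rfl fun z _ => ?_
        ring
    _ = _ := by
        simp only [key, fourierCoef, alignG, bExp]
        generalize (∑ y, chi S y * σ (∑ i, θ.1 i * bsign (y i) + θ.2)) = Y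
        have : ∑ x, f x * (chi S x * Y) = (∑ x, f x * chi S x) * Y := by
          rw [Finset.sum_mul]
          exact Finset.sum_congr rfl fun x _ => by ring
        rw [this]
        field_simp

theorem aux_memLp_G {n : ℕ} (hn : n ≠ 0) {σ : ℝ → ℝ}
    (hσ : MemLp σ 2 (gaussianReal 0 (1 + (n:ℝ≥0)⁻¹))) (f : (Fin n → Bool) → ℝ) :
    MemLp (alignG n f σ) 2 (initMeasure n) := by
  have : alignG n f σ = fun θ => ∑ x, (f x / 2 ^ n) *
      σ (∑ i, θ.1 i * bsign (x i) + θ.2) := by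
    ext θ
    simp only [alignG, bExp, Finset.sum_div]
    exact Finset.sum_congr rfl fun x _ => by ring
  rw [this]
  exact memLp_finsetSum _ fun x _ => (hσ.comp_measurePreserving (aux_lin_law hn x)).const_mul _

theorem aux_coef {n : ℕ} (hn : n ≠ 0) {σ : ℝ → ℝ}
    (hσ : MemLp σ 2 (gaussianReal 0 (1 + (n:ℝ≥0)⁻¹))) (f : (Fin n → Bool) → ℝ)
    (S : Finset (Fin n)) :
    fourierCoef n f S ^ 2 * INAL n (chi S) σ ≤ INAL n f σ := by
  have hf := (aux_memLp_G hn hσ f).integrable_sq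
  have hI : ∀ z, Integrable (fun θ => alignG n f σ (flipMap z θ) ^ 2) (initMeasure n) :=
    fun z => (aux_flip z).integrable_comp_of_integrable hf
  have hE : ∀ z, ∫ θ, alignG n f σ (flipMap z θ) ^ 2 ∂ initMeasure n = INAL n f σ := by
    intro z
    have := integral_map (aux_flip (n := n) z).measurable.aemeasurable
      (f := fun θ => alignG n f σ θ ^ 2) (by
        rw [(aux_flip z).map_eq]; exact hf.aestronglyMeasurable)
    rw [(aux_flip z).map_eq] at this
    exact this.symm
  have h2 : (0:ℝ) < 2 ^ n := by positivity
  calc fourierCoef n f S ^ 2 * INAL n (chi S) σ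
      = ∫ θ, fourierCoef n f S ^ 2 * alignG n (chi S) σ θ ^ 2 ∂ initMeasure n := by
        rw [integral_const_mul]; rfl
    _ ≤ ∫ θ, (∑ z, alignG n f σ (flipMap z θ) ^ 2) / 2 ^ n ∂ initMeasure n := by
        refine integral_mono_of_nonneg (ae_of_all _ fun θ => by positivity)
          ((integrable_finsetSum _ fun z _ => hI z).div_const _) (ae_of_all _ fun θ => ?_)
        have cs := Finset.sum_mul_sq_le_sq_mul_sq Finset.univ (fun z => chi S z)
          (fun z => alignG n f σ (flipMap z θ))
        rw [aux_flip_sum] at cs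
        simp only [chi_sq, Finset.sum_const, Finset.card_univ, Fintype.card_pi, Fintype.card_bool,
          Finset.prod_const, Fintype.card_fin, nsmul_eq_mul, mul_one] at cs
        push_cast at cs
        show _ ≤ _ / _
        rw [le_div_iff₀ h2]
        refine le_of_mul_le_mul_left ?_ h2
        calc _ = _ := by ring
          _ ≤ _ := cs
    _ = INAL n f σ := by
        rw [integral_div, integral_finsetSum _ fun z _ => hI z]
        simp only [hE, Finset.sum_const, Finset.card_univ, Fintype.card_pi, Fintype.card_bool,
          Finset.prod_const, Fintype.card_fin, nsmul_eq_mul]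
        push_cast
        field_simp

theorem aux_inal_chi {n : ℕ} (hn : n ≠ 0) {σ : ℝ → ℝ}
    (hσ : MemLp σ 2 (gaussianReal 0 (1 + (n:ℝ≥0)⁻¹))) (S : Finset (Fin n)) :
    INAL n (chi S) σ = INAL n (monomial n S.card) σ := by
  classical
  set A : Finset (Fin n) := Finset.univ.filter (fun i : Fin n => (i : ℕ) < S.card) with hA
  have hc : A.card = S.card := by
    have hle : S.card ≤ n := by simpa using Finset.card_le_univ S
    rw [hA, Fin.card_filter_val_lt, min_eq_right hle]
  let e := Finset.equivOfCardEq hc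
  let π : Equiv.Perm (Fin n) := Equiv.extendSubtype e
  have hπ1 : ∀ i, i ∈ A → π i ∈ S := fun i hi => Equiv.extendSubtype_mem e i hi
  have hπS : A.map π.toEmbedding = S := by
    refine Finset.eq_of_subset_of_card_le ?_ (by rw [Finset.card_map, hc])
    intro j hj
    obtain ⟨i, hi, rfl⟩ := Finset.mem_map.1 hj
    exact hπ1 i hi
  have hG : ∀ θ : (Fin n → ℝ) × ℝ, alignG n (chi S) σ θ =
      alignG n (monomial n S.card) σ ((fun i => θ.1 (π i)), θ.2) := by
    intro θ
    simp only [alignG, bExp]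
    congr 1
    rw [← (Equiv.arrowCongr π (Equiv.refl Bool)).sum_comp]
    refine Finset.sum_congr rfl fun y _ => ?_
    have e1 : chi S (Equiv.arrowCongr π (Equiv.refl Bool) y) = monomial n S.card y := by
      unfold chi monomial
      rw [← hA, ← hπS, Finset.prod_map]
      exact Finset.prod_congr rfl fun i _ => by simp
    have e2 : ∑ i, θ.1 i * bsign (Equiv.arrowCongr π (Equiv.refl Bool) y i) =
        ∑ i, θ.1 (π i) * bsign (y i) := by
      rw [← Equiv.sum_comp π]
      exact Finset.sum_congr rfl fun i _ => by simp
    rw [e1, e2]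
  have hf := (aux_memLp_G hn hσ (monomial n S.card)).integrable_sq
  have := integral_map (aux_perm (n := n) π).measurable.aemeasurable
      (f := fun θ => alignG n (monomial n S.card) σ θ ^ 2) (by
        rw [(aux_perm π).map_eq]; exact hf.aestronglyMeasurable)
  rw [(aux_perm π).map_eq] at this
  calc INAL n (chi S) σ = ∫ θ, alignG n (chi S) σ θ ^ 2 ∂ initMeasure n := rfl
    _ = _ := by simp only [hG]
    _ = _ := this.symm
    _ = _ := rfl

theorem aux_count (n k : ℕ) (hn : n ≠ 0) :
    (Finset.univ.filter (fun S : Finset (Fin n) => S.card ≤ k)).card ≤ (k + 1) * n ^ k := by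
  classical
  have hsub : Finset.univ.filter (fun S : Finset (Fin n) => S.card ≤ k) ⊆
      (Finset.range (k + 1)).biUnion (fun j => Finset.powersetCard j Finset.univ) := by
    intro S hS
    simp only [Finset.mem_filter, Finset.mem_univ, true_and] at hS
    simp only [Finset.mem_biUnion, Finset.mem_range, Finset.mem_powersetCard]
    exact ⟨S.card, by omega, Finset.subset_univ _, rfl⟩
  refine (Finset.card_le_card hsub).trans (Finset.card_biUnion_le.trans ?_)
  calc _ ≤ ∑ j ∈ Finset.range (k + 1), n ^ k := by
        refine Finset.sum_le_sum fun j hj => ?_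
        rw [Finset.card_powersetCard, Finset.card_univ, Fintype.card_fin]
        refine (Nat.choose_le_pow n j).trans (Nat.pow_le_pow_right (Nat.pos_of_ne_zero hn) ?_)
        have := Finset.mem_range.1 hj; omega
    _ = _ := by simp

theorem aux_inal_nonneg (n : ℕ) (f : (Fin n → Bool) → ℝ) (σ : ℝ → ℝ) : 0 ≤ INAL n f σ :=
  integral_nonneg fun _ => sq_nonneg _

theorem aux_notice {σ : ℝ → ℝ} {k : ℕ} (h : ∃ c : ℕ,
      (fun n : ℕ => ((n : ℝ) ^ c)⁻¹) =O[atTop] fun n : ℕ => INAL n (monomial n k) σ) :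
    ∃ c : ℕ, ∃ C : ℝ, 0 < C ∧ ∀ᶠ n : ℕ in atTop, 1 ≤ C * (n:ℝ) ^ c * INAL n (monomial n k) σ := by
  obtain ⟨c, hc⟩ := h
  obtain ⟨C, hC, hb⟩ := hc.exists_pos
  refine ⟨c, C, hC, ?_⟩
  filter_upwards [hb.bound, eventually_gt_atTop 0] with n hn hn0
  have hp : (0:ℝ) < (n:ℝ) ^ c := by positivity
  rw [Real.norm_of_nonneg (by positivity), Real.norm_of_nonneg (aux_inal_nonneg _ _ _)] at hn
  rw [inv_le_iff_one_le_mul₀ hp] at hn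
  linarith

theorem aux_integrable_of_ne {n : ℕ} {f : (Fin n → Bool) → ℝ} {σ : ℝ → ℝ}
    (h : INAL n f σ ≠ 0) : Integrable (fun θ => alignG n f σ θ ^ 2) (initMeasure n) := by
  by_contra hc
  exact h (integral_undef hc)

theorem aux_sigma {σ : ℝ → ℝ} {m : ℕ} (h0 : INAL (m + 1) (monomial (m + 1) 0) σ ≠ 0)
    (h1 : INAL (m + 1) (monomial (m + 1) 1) σ ≠ 0) {n : ℕ} (hn : m + 1 < n) :
    MemLp σ 2 (gaussianReal 0 (1 + (n:ℝ≥0)⁻¹)) := by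
  have i0 : Integrable (fun θ => cubeSum σ (m + 1) θ.1 θ.2 ^ 2) (initMeasure (m + 1)) := by
    refine ((aux_integrable_of_ne h0).const_mul ((2 ^ (m + 1)) ^ 2)).congr (ae_of_all _ fun θ => ?_)
    simp only [alignG, bExp, cubeSum, monomial, Nat.not_lt_zero, Finset.filter_false,
      Finset.prod_empty, one_mul]
    field_simp
  have hfil : Finset.univ.filter (fun i : Fin (m + 1) => (i : ℕ) < 1) = {0} := by
    ext i
    simp only [Finset.mem_filter, Finset.mem_univ, true_and, Finset.mem_singleton, Fin.ext_iff,
      Fin.val_zero]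
    omega
  have i1 : Integrable (fun θ => cubeSumOne σ m θ.1 θ.2 ^ 2) (initMeasure (m + 1)) := by
    refine ((aux_integrable_of_ne h1).const_mul ((2 ^ (m + 1)) ^ 2)).congr (ae_of_all _ fun θ => ?_)
    simp only [alignG, bExp, cubeSumOne, monomial, hfil, Finset.prod_singleton]
    field_simp
  have hV : InV σ := by
    obtain ⟨s, hs, H⟩ := aux_stepA i0 i1
    exact aux_stepB (H.mono fun ω h => ⟨s, hs, h⟩)
  refine aux_iter (Nat.succ_ne_zero m) i0 hV (by positivity) ?_
  have : ((m + 1 : ℕ) : ℝ≥0) < n := by exact_mod_cast hn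
  gcongr

theorem negligible_inal_implies_high_degree
    (σ : ℝ → ℝ)
    (hcorr : ∀ k : ℕ, ∃ c : ℕ,
      (fun n : ℕ => ((n : ℝ) ^ c)⁻¹) =O[atTop] fun n : ℕ => INAL n (monomial n k) σ)
    (f : ∀ n : ℕ, (Fin n → Bool) → ℝ) (hf : ∀ n, IsBooleanFn (f n))
    (hINAL : Negligible fun n => INAL n (f n) σ) :
    ∀ k : ℕ, Negligible fun n => weightLE n k (f n) := by
  choose c C hC hN using fun k => aux_notice (hcorr k)
  obtain ⟨m, hm0, hm1⟩ : ∃ m, INAL (m + 1) (monomial (m + 1) 0) σ ≠ 0 ∧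
      INAL (m + 1) (monomial (m + 1) 1) σ ≠ 0 := by
    obtain ⟨n, ⟨h0, h1⟩, hn⟩ := (((hN 0).and (hN 1)).and (eventually_gt_atTop 0)).exists
    obtain ⟨m, rfl⟩ : ∃ m, n = m + 1 := ⟨n - 1, by omega⟩
    refine ⟨m, fun h => ?_, fun h => ?_⟩
    · rw [h, mul_zero] at h0; linarith
    · rw [h, mul_zero] at h1; linarith
  intro k d
  set Ct : ℝ := ∑ j ∈ Finset.range (k + 1), C j with hCt
  set ct : ℕ := ∑ j ∈ Finset.range (k + 1), c j with hct
  have hlim := (hINAL (d + k + ct)).const_mul ((k + 1 : ℝ) * Ct)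
  rw [mul_zero] at hlim
  have hall : ∀ᶠ n : ℕ in atTop, ∀ j ∈ Finset.range (k + 1),
      1 ≤ C j * (n:ℝ) ^ c j * INAL n (monomial n j) σ :=
    (Filter.eventually_all_finset _).2 fun j _ => hN j
  refine squeeze_zero' (Eventually.of_forall fun n => ?_) ?_ hlim
  · exact mul_nonneg (by positivity) (Finset.sum_nonneg fun S _ => sq_nonneg _)
  filter_upwards [hall, eventually_gt_atTop (m + 1)] with n hn hmn
  have hn0 : n ≠ 0 := by omega
  have hn1 : (1:ℝ) ≤ n := by exact_mod_cast Nat.pos_of_ne_zero hn0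
  have hσ := aux_sigma hm0 hm1 hmn
  have hI0 := aux_inal_nonneg n (f n) σ
  have hCt0 : 0 ≤ Ct := Finset.sum_nonneg fun j _ => (hC j).le
  have hcoef : ∀ S ∈ Finset.univ.filter (fun S : Finset (Fin n) => S.card ≤ k),
      fourierCoef n (f n) S ^ 2 ≤ Ct * (n:ℝ) ^ ct * INAL n (f n) σ := by
    intro S hS
    simp only [Finset.mem_filter, Finset.mem_univ, true_and] at hS
    have hj : S.card ∈ Finset.range (k + 1) := Finset.mem_range.2 (by omega)
    have h1 := hn _ hj
    have h2 := aux_coef hn0 hσ (f n) S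
    rw [aux_inal_chi hn0 hσ] at h2
    have hCj := hC S.card
    have h3 : C S.card ≤ Ct :=
      Finset.single_le_sum (f := C) (fun j _ => (hC j).le) hj
    have h4 : c S.card ≤ ct := Finset.single_le_sum (f := c) (fun j _ => Nat.zero_le _) hj
    calc fourierCoef n (f n) S ^ 2
        ≤ fourierCoef n (f n) S ^ 2 *
          (C S.card * (n:ℝ) ^ c S.card * INAL n (monomial n S.card) σ) :=
          le_mul_of_one_le_right (sq_nonneg _) h1
      _ = C S.card * (n:ℝ) ^ c S.card *
          (fourierCoef n (f n) S ^ 2 * INAL n (monomial n S.card) σ) := by ring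
      _ ≤ C S.card * (n:ℝ) ^ c S.card * INAL n (f n) σ := by gcongr
      _ ≤ _ := by gcongr
  have hw : weightLE n k (f n) ≤ ((k + 1) * (n:ℝ) ^ k) * (Ct * (n:ℝ) ^ ct * INAL n (f n) σ) := by
    refine (Finset.sum_le_card_nsmul _ _ _ hcoef).trans ?_
    rw [nsmul_eq_mul]
    have : ((Finset.univ.filter (fun S : Finset (Fin n) => S.card ≤ k)).card : ℝ) ≤
        (k + 1) * (n:ℝ) ^ k := by exact_mod_cast aux_count n k hn0
    gcongr
  calc (n:ℝ) ^ d * weightLE n k (f n) 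
      ≤ (n:ℝ) ^ d * (((k + 1) * (n:ℝ) ^ k) * (Ct * (n:ℝ) ^ ct * INAL n (f n) σ)) := by gcongr
    _ = _ := by rw [pow_add, pow_add]; ring
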